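/- arXiv:1608.06178 — 6 statements merged into one kernel-verified Lean document; each statement's English description precedes it below -/
import Mathlib

section
/- If c > 0 and 0 < d < 1, then the equation x = ((1 + c·d·x)/(d + c·x))³ has exactly one solution x with x ≥ 0. -/
/-!
A decreasing continuous function `f` on `[0, ∞)` with `0 ≤ f 0` has exactly one fixed point there:
at least one by the intermediate value theorem on `[0, f 0]`, where `f (f 0) ≤ f 0`, and at most one
because the identity increases while `f` decreases. A Möbius map `x ↦ (b + a * x) / (d + c * x)`
is decreasing where its denominator is positive as soon as its determinant `a * d - b * c` is
nonpositive, and so are its powers where it is moreover nonnegative. In the Ising–Vannimenus model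
the determinant is `c * (d ^ 2 - 1)`, and the exponent is the order of the Cayley tree.
-/

open Function Set

theorem eq_of_antitoneOn_of_isFixedPt {α : Type*} [LinearOrder α] {f : α → α} {s : Set α}
    (hf : AntitoneOn f s) {x y : α} (hx : x ∈ s) (hy : y ∈ s) (hfx : IsFixedPt f x)
    (hfy : IsFixedPt f y) : x = y := by
  wlog hxy : x ≤ y generalizing x y
  · exact (this hy hx hfy hfx (le_of_not_ge hxy)).symm
  refine hxy.antisymm ?_
  calc
    y = f y := hfy.symm
    _ ≤ f x := hf hx hy hxy
    _ = x := hfx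

theorem existsUnique_isFixedPt_of_antitoneOn_Ici {α : Type*} [ConditionallyCompleteLinearOrder α]
    [TopologicalSpace α] [OrderTopology α] [DenselyOrdered α] {f : α → α} {a : α}
    (hanti : AntitoneOn f (Ici a)) (hcont : ContinuousOn f (Ici a)) (ha : a ≤ f a) :
    ∃! x, a ≤ x ∧ IsFixedPt f x := by
  obtain ⟨x, hx, hfx⟩ := exists_mem_Icc_isFixedPt (hcont.mono Icc_subset_Ici_self) ha ha
    (hanti self_mem_Ici ha ha)
  exact ⟨x, ⟨hx.1, hfx⟩, fun y hy ↦ eq_of_antitoneOn_of_isFixedPt hanti hy.1 hx.1 hy.2 hfx⟩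

theorem antitoneOn_affine_div_affine {K : Type*} [Field K] [LinearOrder K] [IsStrictOrderedRing K]
    {a b c d : K} (hdet : a * d ≤ b * c) :
    AntitoneOn (fun x ↦ (b + a * x) / (d + c * x)) {x | 0 < d + c * x} := by
  intro x hx y hy hxy
  have cross_sub : (b + a * x) * (d + c * y) - (b + a * y) * (d + c * x) =
      (b * c - a * d) * (y - x) := by ring
  refine (div_le_div_iff₀ hy hx).2 (sub_nonneg.1 ?_)
  rw [cross_sub]
  exact mul_nonneg (sub_nonneg.2 hdet) (sub_nonneg.2 hxy)

theorem fixedPoint_unique_general {a b c d : ℝ} (ha : 0 ≤ a) (hb : 0 ≤ b) (hc : 0 ≤ c)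
    (hd : 0 < d) (hdet : a * d ≤ b * c) (k : ℕ) :
    ∃! x : ℝ, 0 ≤ x ∧ x = ((b + a * x) / (d + c * x)) ^ k := by
  have den_pos : ∀ x ∈ Ici (0 : ℝ), 0 < d + c * x := fun x hx ↦
    add_pos_of_pos_of_nonneg hd (mul_nonneg hc hx)
  have base_nonneg : ∀ x ∈ Ici (0 : ℝ), 0 ≤ (b + a * x) / (d + c * x) := fun x hx ↦
    div_nonneg (add_nonneg hb (mul_nonneg ha hx)) (den_pos x hx).le
  have anti : AntitoneOn (fun x ↦ ((b + a * x) / (d + c * x)) ^ k) (Ici 0) := fun x hx y hy hxy ↦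
    pow_le_pow_left₀ (base_nonneg y hy)
      (antitoneOn_affine_div_affine hdet (den_pos x hx) (den_pos y hy) hxy) k
  have cont : ContinuousOn (fun x ↦ ((b + a * x) / (d + c * x)) ^ k) (Ici 0) :=
    .pow (.div (by fun_prop) (by fun_prop) fun x hx ↦ (den_pos x hx).ne') k
  simpa only [IsFixedPt, eq_comm] using
    existsUnique_isFixedPt_of_antitoneOn_Ici anti cont (pow_nonneg (base_nonneg 0 self_mem_Ici) k)

/-- If `c > 0` and `0 < d < 1`, then the equation `x = ((1 + c*d*x)/(d + c*x))^3`
has exactly one solution `x` with `x ≥ 0`. -/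
theorem fixedPoint_unique (c d : ℝ) (hc : 0 < c) (hd0 : 0 < d) (hd1 : d < 1) :
    ∃! x : ℝ, 0 ≤ x ∧ x = ((1 + c * d * x) / (d + c * x)) ^ 3 := by
  have hdet : c * d * d ≤ 1 * c := calc
    c * d * d ≤ c * 1 * 1 := by gcongr
    _ = 1 * c := by ring
  exact fixedPoint_unique_general (by positivity) zero_le_one hc.le hd0 hdet 3
end

section
/- If c > 0 and d > √2, then g''(x) > 0 for all x in the open interval (0, (d² − 2)/(c·d)) and g''(x) < 0 for all x in ((d² − 2)/(c·d), ∞); that is, the graph of g is concave up on (0, (d² − 2)/(c·d)) and concave down on ((d² − 2)/(c·d), ∞). -/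
/-!
Differentiating a quotient of powers of `a + b x` and `p + q x` gives such a quotient again, times
a polynomial of degree at most one. For `g` this polynomial is constant the first time, because the
`x`-terms of `b (p + q x) - q (a + b x)` cancel, and the second time it is a positive multiple of
`d ^ 2 - 2 - c d x`, whose sign decides the concavity as long as `1 + c d x` and hence, by
`d (d + c x) = (d ^ 2 - 1) + (1 + c d x)`, also `d + c x` are positive.
-/

section LinearFractional

variable {𝕜 : Type*} [NontriviallyNormedField 𝕜] {a b p q x : 𝕜}

lemma hasDerivAt_const_add_mul (a b x : 𝕜) : HasDerivAt (fun y => a + b * y) b x := by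
  simpa using ((hasDerivAt_id x).const_mul b).const_add a

lemma hasDerivAt_affine_pow_div_affine_pow (m k : ℕ) (hx : p + q * x ≠ 0) :
    HasDerivAt (fun y => (a + b * y) ^ (m + 1) / (p + q * y) ^ k)
      ((a + b * x) ^ m * ((m + 1) * b * (p + q * x) - k * q * (a + b * x)) /
        (p + q * x) ^ (k + 1)) x := by
  have hnum := (hasDerivAt_const_add_mul a b x).fun_pow (m + 1)
  have hden := (hasDerivAt_const_add_mul p q x).fun_pow k
  refine (hnum.fun_div hden (pow_ne_zero k hx)).congr_deriv ?_
  rw [div_eq_div_iff (pow_ne_zero 2 (pow_ne_zero k hx)) (pow_ne_zero (k + 1) hx)]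
  cases k <;> simp only [Nat.add_sub_cancel] <;> push_cast <;> ring

lemma deriv_linearFractional_pow (n : ℕ) (hx : p + q * x ≠ 0) :
    deriv (fun y => ((a + b * y) / (p + q * y)) ^ (n + 1)) x =
      (n + 1) * (b * p - a * q) * ((a + b * x) ^ n / (p + q * x) ^ (n + 2)) := by
  simp only [div_pow]
  rw [(hasDerivAt_affine_pow_div_affine_pow n (n + 1) hx).deriv]
  push_cast
  ring

lemma deriv_deriv_linearFractional_pow (n : ℕ) (hx : p + q * x ≠ 0) :
    deriv (deriv fun y => ((a + b * y) / (p + q * y)) ^ (n + 2)) x =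
      (n + 2) * (b * p - a * q) * ((a + b * x) ^ n *
        ((n + 1) * b * (p + q * x) - (n + 3) * q * (a + b * x)) / (p + q * x) ^ (n + 4)) := by
  have hne : ∀ᶠ y in nhds x, p + q * y ≠ 0 :=
    (hasDerivAt_const_add_mul p q x).continuousAt.eventually_ne hx
  have hderiv := hne.mono fun y hy =>
    deriv_linearFractional_pow (a := a) (b := b) (n + 1) hy
  rw [Filter.EventuallyEq.deriv_eq hderiv,
    ((hasDerivAt_affine_pow_div_affine_pow n (n + 3) hx).const_mul _).deriv]
  push_cast
  ring

lemma deriv_deriv_linearFractional_cube {c d : 𝕜} (hx : d + c * x ≠ 0) :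
    deriv (deriv fun y => ((1 + c * d * y) / (d + c * y)) ^ 3) x =
      6 * c ^ 2 * (d ^ 2 - 1) * (1 + c * d * x) * (d ^ 2 - 2 - c * d * x) / (d + c * x) ^ 5 := by
  rw [deriv_deriv_linearFractional_pow 1 hx]
  push_cast
  ring

end LinearFractional

lemma exists_pos_deriv_deriv_linearFractional_cube_eq_mul {c d x : ℝ} (hc : c ≠ 0) (hd : 1 < d)
    (hx : -1 < c * d * x) :
    ∃ k > 0, deriv (deriv fun y : ℝ => ((1 + c * d * y) / (d + c * y)) ^ 3) x =
      k * (d ^ 2 - 2 - c * d * x) := by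
  have hsq : 0 < d ^ 2 - 1 := sub_pos.2 (one_lt_pow₀ hd two_ne_zero)
  have hnum : 0 < 1 + c * d * x := by linarith
  have hsplit : d * (d + c * x) = (d ^ 2 - 1) + (1 + c * d * x) := by ring
  have hden : 0 < d + c * x :=
    pos_of_mul_pos_right (hsplit ▸ add_pos hsq hnum) (by linarith)
  refine ⟨6 * c ^ 2 * (d ^ 2 - 1) * (1 + c * d * x) / (d + c * x) ^ 5, by positivity, ?_⟩
  rw [deriv_deriv_linearFractional_cube hden.ne']
  ring

theorem g_concavity_general (c d : ℝ) (hc : 0 < c) (hd : 1 < d) :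
    (∀ x ∈ Set.Ioo (-1 / (c * d)) ((d ^ 2 - 2) / (c * d)),
        0 < deriv (deriv (fun y : ℝ => ((1 + c * d * y) / (d + c * y)) ^ 3)) x) ∧
    (∀ x ∈ Set.Ioi ((d ^ 2 - 2) / (c * d)),
        deriv (deriv (fun y : ℝ => ((1 + c * d * y) / (d + c * y)) ^ 3)) x < 0) := by
  have hcd : 0 < c * d := mul_pos hc (by linarith)
  constructor
  · rintro x ⟨hlower, hupper⟩
    rw [div_lt_iff₀' hcd] at hlower
    rw [lt_div_iff₀' hcd] at hupper
    obtain ⟨k, hk, hderiv⟩ :=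
      exists_pos_deriv_deriv_linearFractional_cube_eq_mul hc.ne' hd hlower
    exact hderiv ▸ mul_pos hk (sub_pos.2 hupper)
  · intro x hx
    rw [Set.mem_Ioi, div_lt_iff₀' hcd] at hx
    have hsq : 1 < d ^ 2 := one_lt_pow₀ hd two_ne_zero
    have hlower : -1 < c * d * x := by linarith
    obtain ⟨k, hk, hderiv⟩ :=
      exists_pos_deriv_deriv_linearFractional_cube_eq_mul hc.ne' hd hlower
    exact hderiv ▸ mul_neg_of_pos_of_neg hk (sub_neg.2 hx)

/-- If `c > 0` and `d > √2`, then the second derivative of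
`g x = ((1 + c*d*x)/(d + c*x))^3` is positive on `(0, (d^2 - 2)/(c*d))` and negative on
`((d^2 - 2)/(c*d), ∞)`: the graph of `g` is concave up on the first interval and concave
down on the second. -/
theorem g_concavity (c d : ℝ) (hc : 0 < c) (hd : Real.sqrt 2 < d) :
    (∀ x ∈ Set.Ioo (0 : ℝ) ((d ^ 2 - 2) / (c * d)),
        0 < deriv (deriv (fun y : ℝ => ((1 + c * d * y) / (d + c * y)) ^ 3)) x) ∧
    (∀ x ∈ Set.Ioi ((d ^ 2 - 2) / (c * d)),
        deriv (deriv (fun y : ℝ => ((1 + c * d * y) / (d + c * y)) ^ 3)) x < 0) := by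
  have hd1 : 1 < d := Real.one_lt_sqrt_two.trans hd
  exact (g_concavity_general c d hc hd1).imp_left fun hpos x hx =>
    hpos x ⟨(div_neg_of_neg_of_pos (by norm_num) (by positivity)).trans hx.1, hx.2⟩
end

section
/- For all real parameters c > 0 and d > 0, the equation g(x) = x has at most 3 solutions with x ≥ 0, where g(x) = ((1 + c·d·x)/(d + c·x))³. -/
/-! Put `y = (a + b * x) / (d + c * x)`. A solution `x` of `y ^ k = x` is determined by `y`, and
substituting `x = y ^ k` turns the equation into `c * y ^ (k + 1) - b * y ^ k + d * y - a = 0`.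
This polynomial has at most four terms, so by Descartes' rule of signs it has at most three
positive roots, whatever the exponent `k`. -/

open Polynomial

section PositiveRoots

variable {R : Type*}

theorem signVariations_lt_card_support [Semiring R] [LinearOrder R] {P : R[X]} (hP : P ≠ 0) :
    P.signVariations < P.support.card := by
  induction hn : P.support.card generalizing P with
  | zero => exact absurd (card_support_eq_zero.mp hn) hP
  | succ n ih =>
    have card_eraseLead : P.eraseLead.support.card = n := card_support_eraseLead' hn
    by_cases hE : P.eraseLead = 0
    · have hmonomial : P = monomial P.natDegree P.leadingCoeff := by
        simpa only [hE, zero_add] using P.eraseLead_add_monomial_natDegree_leadingCoeff.symm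
      rw [hmonomial, signVariations_monomial]
      exact n.succ_pos
    · calc P.signVariations ≤ P.eraseLead.signVariations + 1 := P.signVariations_le_eraseLead_succ
        _ < n + 1 := Nat.add_lt_add_right (ih hE card_eraseLead) 1

theorem card_filter_pos_roots_lt_card_support [CommRing R] [LinearOrder R] [IsStrictOrderedRing R]
    {P : R[X]} (hP : P ≠ 0) : {y ∈ P.roots.toFinset | 0 < y}.card < P.support.card :=
  calc {y ∈ P.roots.toFinset | 0 < y}.card
      ≤ P.roots.countP (0 < ·) := by
        rw [← Multiset.toFinset_filter, Multiset.countP_eq_card_filter]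
        exact Multiset.toFinset_card_le _
    _ ≤ P.signVariations := roots_countP_pos_le_signVariations P
    _ < P.support.card := signVariations_lt_card_support hP

end PositiveRoots

/-- The polynomial `c * X ^ (k + 1) - b * X ^ k + d * X - a`, obtained from the fixed-point equation
`((a + b * x) / (d + c * x)) ^ k = x` by clearing the denominator in `y = (a + b * x) / (d + c * x)`
and writing `x = y ^ k`: its unknown is the `k`-th root `y` of the fixed point, not `x` itself. -/
noncomputable def fixedPointPolynomial {R : Type*} [Ring R] (a b c d : R) (k : ℕ) : R[X] :=
  C c * X ^ (k + 1) - C b * X ^ k + C d * X - C a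

namespace fixedPointPolynomial

theorem card_support_le_four {R : Type*} [Ring R] (a b c d : R) (k : ℕ) :
    (fixedPointPolynomial a b c d k).support.card ≤ 4 := by
  have support_subset : (fixedPointPolynomial a b c d k).support ⊆ {k + 1, k, 1, 0} := by
    intro n hn
    contrapose! hn
    simp only [Finset.mem_insert, Finset.mem_singleton, not_or] at hn
    obtain ⟨hk1, hk, h1, h0⟩ := hn
    simp [fixedPointPolynomial, coeff_X_pow, coeff_X_of_ne_one h1, coeff_C_of_ne_zero h0, hk1, hk]
  exact (Finset.card_le_card support_subset).trans Finset.card_le_four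

theorem ne_zero {R : Type*} [CommRing R] [LinearOrder R] [IsStrictOrderedRing R] {a b : R}
    (ha : 0 < a) (hb : 0 ≤ b) (c d : R) (k : ℕ) : fixedPointPolynomial a b c d k ≠ 0 := by
  have eval_zero : (fixedPointPolynomial a b c d k).eval 0 = -(a + b * 0 ^ k) := by
    simp [fixedPointPolynomial, sub_eq_add_neg, add_comm]
  have eval_zero_neg : (fixedPointPolynomial a b c d k).eval 0 < 0 := by
    rw [eval_zero]
    exact neg_neg_of_pos (by positivity)
  intro h
  exact eval_zero_neg.ne (by rw [h, Polynomial.eval_zero])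

theorem isRoot_of_pow_eq {K : Type*} [Field K] {a b c d x : K} {k : ℕ} (hden : d + c * x ≠ 0)
    (hx : ((a + b * x) / (d + c * x)) ^ k = x) :
    (fixedPointPolynomial a b c d k).IsRoot ((a + b * x) / (d + c * x)) := by
  have hy : (a + b * x) / (d + c * x) * (d + c * x) = a + b * x := div_mul_cancel₀ _ hden
  simp only [IsRoot.def, fixedPointPolynomial, eval_sub, eval_add, eval_mul, eval_C, eval_pow,
    eval_X, pow_succ, hx]
  linear_combination hy

end fixedPointPolynomial

theorem fixedPoints_atMost_three_general {K : Type*} [Field K] [LinearOrder K]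
    [IsStrictOrderedRing K] {a b c d : K} (ha : 0 < a) (hb : 0 ≤ b) (hc : 0 ≤ c) (hd : 0 < d)
    (k : ℕ) :
    ∃ S : Finset K, S.card ≤ 3 ∧
      ∀ x : K, 0 ≤ x → ((a + b * x) / (d + c * x)) ^ k = x → x ∈ S := by
  set P : K[X] := fixedPointPolynomial a b c d k
  have hP : P ≠ 0 := fixedPointPolynomial.ne_zero ha hb c d k
  have card_posRoots : {y ∈ P.roots.toFinset | 0 < y}.card ≤ 3 :=
    Nat.le_of_lt_succ <| (card_filter_pos_roots_lt_card_support hP).trans_le <|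
      fixedPointPolynomial.card_support_le_four a b c d k
  refine ⟨{y ∈ P.roots.toFinset | 0 < y}.image (· ^ k), Finset.card_image_le.trans card_posRoots,
    fun x hx hfix ↦ Finset.mem_image.mpr ⟨(a + b * x) / (d + c * x), ?_, hfix⟩⟩
  have hden : 0 < d + c * x := by positivity
  have hroot : P.IsRoot ((a + b * x) / (d + c * x)) :=
    fixedPointPolynomial.isRoot_of_pow_eq hden.ne' hfix
  have hpos : 0 < (a + b * x) / (d + c * x) := by positivity
  exact Finset.mem_filter.mpr ⟨Multiset.mem_toFinset.mpr ((mem_roots hP).mpr hroot), hpos⟩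

/-- For all real parameters `c > 0` and `d > 0`, the equation `g x = x` has at most 3
solutions with `x ≥ 0`, where `g x = ((1 + c*d*x)/(d + c*x))^3`. -/
theorem fixedPoints_atMost_three (c d : ℝ) (hc : 0 < c) (hd : 0 < d) :
    ∃ S : Finset ℝ, S.card ≤ 3 ∧
      ∀ x : ℝ, 0 ≤ x → ((1 + c * d * x) / (d + c * x)) ^ 3 = x → x ∈ S :=
  fixedPoints_atMost_three_general one_pos (mul_pos hc hd).le hc.le hd 3
end

section
/- For all c > 0 and d > 2, one has 0 < η₁(c,d) < η₂(c,d), where η₁(c,d) = −c·d⁴·(1 − d² + √(4 − 5d² + d⁴))³ / ((2 − 2d² + √(4 − 5d² + d⁴))³ · (2 − d² + √(4 − 5d² + d⁴))) and η₂(c,d) = c·d⁴·(−1 + d² + √(4 − 5d² + d⁴))³ / ((−2 + d² + √(4 − 5d² + d⁴)) · (−2 + 2d² + √(4 − 5d² + d⁴))³). -/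
/-!
For `g x = ((1 + c * d * x) / (d + c * x)) ^ 3`, the slope `g x / x` increases where
`g x < x * g' x`. Since `g' / g` is rational, this inequality is quadratic in `x`, and it holds
exactly between the two roots `x₁ < x₂` of the tangency equation. Hence
`η₁ = g x₁ / x₁ < g x₂ / x₂ = η₂`.
-/

open Set

theorem strictMonoOn_div_id_of_lt_mul_deriv {f f' : ℝ → ℝ} {D : Set ℝ} (hD : Convex ℝ D)
    (hD0 : ∀ x ∈ D, x ≠ 0) (hf : ContinuousOn f D)
    (hf' : ∀ x ∈ interior D, HasDerivAt f (f' x) x)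
    (hlt : ∀ x ∈ interior D, f x < x * f' x) :
    StrictMonoOn (fun x ↦ f x / x) D := by
  have hne : ∀ x ∈ interior D, x ≠ 0 := fun x hx ↦ hD0 x (interior_subset hx)
  refine strictMonoOn_of_hasDerivWithinAt_pos hD (hf.div continuousOn_id hD0)
    (fun x hx ↦ ((hf' x hx).div (hasDerivAt_id x) (hne x hx)).hasDerivWithinAt) fun x hx ↦ ?_
  refine div_pos ?_ (sq_pos_of_ne_zero (hne x hx))
  simp only [id, mul_one]
  linarith [hlt x hx]

/-- The `n`-th power of the Möbius map `x ↦ (1 + c d x) / (d + c x)`. The curve `y = g x` of the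
theorem is the case `n = 3`; the exponent is kept general because the tangency condition has the
same shape for every `n`. -/
noncomputable def mobiusPow (n : ℕ) (c d x : ℝ) : ℝ :=
  ((1 + c * d * x) / (d + c * x)) ^ n

/-- The abscissa at which a line through the origin touches the graph of `mobiusPow 3 c d`, where
`s` is either square root of `4 - 5 * d ^ 2 + d ^ 4`: the roots `x₁ < x₂` of the tangency equation
are `tangentPoint c d (-s)` and `tangentPoint c d s` for the positive `s`. -/
noncomputable def tangentPoint (c d s : ℝ) : ℝ :=
  (d ^ 2 - 2 + s) / (c * d)

section MobiusPow

variable {n : ℕ} {c d x p q : ℝ}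

theorem mobiusPow_pos (hnum : 0 < 1 + c * d * x) (hden : 0 < d + c * x) :
    0 < mobiusPow n c d x :=
  pow_pos (div_pos hnum hden) n

theorem hasDerivAt_mobiusPow (hnum : 1 + c * d * x ≠ 0) (hden : d + c * x ≠ 0) :
    HasDerivAt (mobiusPow n c d)
      (mobiusPow n c d x * (n * (c * (d ^ 2 - 1)) / ((1 + c * d * x) * (d + c * x)))) x := by
  have hnum' : HasDerivAt (fun y ↦ 1 + c * d * y) (c * d) x := by
    simpa using ((hasDerivAt_id x).const_mul (c * d)).const_add 1
  have hden' : HasDerivAt (fun y ↦ d + c * y) c x := by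
    simpa using ((hasDerivAt_id x).const_mul c).const_add d
  refine ((hnum'.div hden' hden).pow n).congr_deriv ?_
  rcases n with _ | n
  · simp
  · simp only [mobiusPow, Pi.div_apply, Nat.add_sub_cancel, pow_succ]
    field_simp
    ring

theorem mobiusPow_lt_mul_deriv (hnum : 0 < 1 + c * d * x) (hden : 0 < d + c * x)
    (h : (1 + c * d * x) * (d + c * x) < n * (c * (d ^ 2 - 1)) * x) :
    mobiusPow n c d x <
      x * (mobiusPow n c d x * (n * (c * (d ^ 2 - 1)) / ((1 + c * d * x) * (d + c * x)))) := by
  have hlog : 1 < n * (c * (d ^ 2 - 1)) * x / ((1 + c * d * x) * (d + c * x)) :=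
    (one_lt_div (mul_pos hnum hden)).mpr h
  calc mobiusPow n c d x
      < mobiusPow n c d x * (n * (c * (d ^ 2 - 1)) * x / ((1 + c * d * x) * (d + c * x))) :=
        lt_mul_of_one_lt_right (mobiusPow_pos hnum hden) hlog
    _ = _ := by ring

theorem strictMonoOn_mobiusPow_div_id (hc : 0 < c) (hd : 0 < d) (hp : 0 < p)
    (h : ∀ x ∈ Ioo p q, (1 + c * d * x) * (d + c * x) < n * (c * (d ^ 2 - 1)) * x) :
    StrictMonoOn (fun x ↦ mobiusPow n c d x / x) (Icc p q) := by
  have hpos : ∀ x ∈ Icc p q, 0 < x := fun x hx ↦ hp.trans_le hx.1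
  have hnum : ∀ x ∈ Icc p q, 0 < 1 + c * d * x := fun x hx ↦ by
    have := hpos x hx
    positivity
  have hden : ∀ x ∈ Icc p q, 0 < d + c * x := fun x hx ↦ by
    have := hpos x hx
    positivity
  have hderiv := fun x hx ↦
    hasDerivAt_mobiusPow (n := n) (hnum x hx).ne' (hden x hx).ne'
  refine strictMonoOn_div_id_of_lt_mul_deriv (convex_Icc p q) (fun x hx ↦ (hpos x hx).ne')
    (fun x hx ↦ (hderiv x hx).continuousAt.continuousWithinAt)
    (fun x hx ↦ hderiv x (interior_subset hx)) fun x hx ↦ ?_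
  have hx' := interior_subset hx
  rw [interior_Icc] at hx
  exact mobiusPow_lt_mul_deriv (hnum x hx') (hden x hx') (h x hx)

end MobiusPow

section TangentPoint

variable {c d s : ℝ}

theorem tangency_discrim_pos (hd : 4 < d ^ 2) : 0 < 4 - 5 * d ^ 2 + d ^ 4 :=
  calc 0 < (d ^ 2 - 1) * (d ^ 2 - 4) := mul_pos (by linarith) (by linarith)
    _ = 4 - 5 * d ^ 2 + d ^ 4 := by ring

theorem tangentPoint_pos (hc : 0 < c) (hd : 0 < d) (hd2 : 2 < d ^ 2)
    (hs : s ^ 2 = 4 - 5 * d ^ 2 + d ^ 4) : 0 < tangentPoint c d s := by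
  have hsq : s ^ 2 < (d ^ 2 - 2) ^ 2 := by linarith [pow_pos hd 2]
  have habs : |s| < d ^ 2 - 2 := abs_lt_of_sq_lt_sq hsq (by linarith)
  exact div_pos (by linarith [neg_lt_of_abs_lt habs]) (mul_pos hc hd)

theorem strictMono_tangentPoint (hcd : 0 < c * d) : StrictMono (tangentPoint c d) :=
  fun _ _ h ↦ div_lt_div_of_pos_right (add_lt_add_right h _) hcd

theorem tangency_eq_mul_sub_tangentPoint (hc : c ≠ 0) (hd : d ≠ 0)
    (hs : s ^ 2 = 4 - 5 * d ^ 2 + d ^ 4) (x : ℝ) :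
    3 * (c * (d ^ 2 - 1)) * x - (1 + c * d * x) * (d + c * x) =
      c ^ 2 * d * ((x - tangentPoint c d (-s)) * (tangentPoint c d s - x)) := by
  unfold tangentPoint
  field_simp
  linear_combination -hs

theorem mobiusPow_three_tangentPoint_div (hc : c ≠ 0) (hd : d ≠ 0) (s : ℝ) :
    mobiusPow 3 c d (tangentPoint c d s) / tangentPoint c d s =
      c * d ^ 4 * (d ^ 2 - 1 + s) ^ 3 / ((d ^ 2 - 2 + s) * (2 * d ^ 2 - 2 + s) ^ 3) := by
  have hnum : 1 + c * d * tangentPoint c d s = d ^ 2 - 1 + s := by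
    rw [tangentPoint, mul_div_cancel₀ _ (mul_ne_zero hc hd)]
    ring
  have hden : d + c * tangentPoint c d s = (2 * d ^ 2 - 2 + s) / d := by
    unfold tangentPoint
    field_simp
    ring
  rw [mobiusPow, hnum, hden, tangentPoint]
  field_simp

theorem strictMonoOn_mobiusPow_three_div_id (hc : 0 < c) (hd : 0 < d) (hd2 : 2 < d ^ 2)
    (hs : s ^ 2 = 4 - 5 * d ^ 2 + d ^ 4) :
    StrictMonoOn (fun x ↦ mobiusPow 3 c d x / x)
      (Icc (tangentPoint c d (-s)) (tangentPoint c d s)) := by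
  have hs' : (-s) ^ 2 = 4 - 5 * d ^ 2 + d ^ 4 := by rw [neg_sq, hs]
  refine strictMonoOn_mobiusPow_div_id hc hd (tangentPoint_pos hc hd hd2 hs') fun x hx ↦ ?_
  have hprod : 0 < (x - tangentPoint c d (-s)) * (tangentPoint c d s - x) :=
    mul_pos (sub_pos.mpr hx.1) (sub_pos.mpr hx.2)
  rw [← sub_pos, Nat.cast_ofNat, tangency_eq_mul_sub_tangentPoint hc.ne' hd.ne' hs]
  positivity

end TangentPoint

/-- For all `c > 0` and `d > 2`, one has `0 < η₁(c,d) < η₂(c,d)`, where `η₁, η₂` are the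
two critical tangency slopes of the line `y = m*x` with the curve
`y = ((1 + c*d*x)/(d + c*x))^3`. -/
theorem eta_pos_lt (c d : ℝ) (hc : 0 < c) (hd : 2 < d) :
    0 < -(c * d ^ 4 * (1 - d ^ 2 + Real.sqrt (4 - 5 * d ^ 2 + d ^ 4)) ^ 3)
          / ((2 - 2 * d ^ 2 + Real.sqrt (4 - 5 * d ^ 2 + d ^ 4)) ^ 3
              * (2 - d ^ 2 + Real.sqrt (4 - 5 * d ^ 2 + d ^ 4))) ∧
    -(c * d ^ 4 * (1 - d ^ 2 + Real.sqrt (4 - 5 * d ^ 2 + d ^ 4)) ^ 3)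
          / ((2 - 2 * d ^ 2 + Real.sqrt (4 - 5 * d ^ 2 + d ^ 4)) ^ 3
              * (2 - d ^ 2 + Real.sqrt (4 - 5 * d ^ 2 + d ^ 4)))
      < c * d ^ 4 * (-1 + d ^ 2 + Real.sqrt (4 - 5 * d ^ 2 + d ^ 4)) ^ 3
          / ((-2 + d ^ 2 + Real.sqrt (4 - 5 * d ^ 2 + d ^ 4))
              * (-2 + 2 * d ^ 2 + Real.sqrt (4 - 5 * d ^ 2 + d ^ 4)) ^ 3) := by
  have hd0 : 0 < d := by linarith
  have hd2 : 2 ^ 2 < d ^ 2 := pow_lt_pow_left₀ hd zero_le_two two_ne_zero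
  have hdisc := tangency_discrim_pos (d := d) (by linarith)
  have hs0 := Real.sqrt_pos.mpr hdisc
  have hs := Real.sq_sqrt hdisc.le
  set s := Real.sqrt (4 - 5 * d ^ 2 + d ^ 4)
  have hη₁ : mobiusPow 3 c d (tangentPoint c d (-s)) / tangentPoint c d (-s) =
      -(c * d ^ 4 * (1 - d ^ 2 + s) ^ 3) / ((2 - 2 * d ^ 2 + s) ^ 3 * (2 - d ^ 2 + s)) := by
    rw [mobiusPow_three_tangentPoint_div hc.ne' hd0.ne']; congr 1 <;> ring
  have hη₂ : mobiusPow 3 c d (tangentPoint c d s) / tangentPoint c d s =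
      c * d ^ 4 * (-1 + d ^ 2 + s) ^ 3 / ((-2 + d ^ 2 + s) * (-2 + 2 * d ^ 2 + s) ^ 3) := by
    rw [mobiusPow_three_tangentPoint_div hc.ne' hd0.ne']; congr 1 <;> ring
  have hx₁ : 0 < tangentPoint c d (-s) :=
    tangentPoint_pos hc hd0 (by linarith) (by rw [neg_sq, hs])
  have hx : tangentPoint c d (-s) < tangentPoint c d s :=
    strictMono_tangentPoint (mul_pos hc hd0) (by linarith)
  rw [← hη₁, ← hη₂]
  exact ⟨div_pos (mobiusPow_pos (by positivity) (by positivity)) hx₁,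
    strictMonoOn_mobiusPow_three_div_id hc hd0 (by linarith) hs
      (left_mem_Icc.mpr hx.le) (right_mem_Icc.mpr hx.le) hx⟩
end

section
/- Let a, b, L > 0 and let v₁, v₄, v₅, v₈ be positive reals satisfying v₁ = v₄³ and v₈ = v₅³, together with the fixed-point system: v₁ = L^{1/3}·((1 + (ab)²·v₁·v₄)/(a·b·v₄))³, v₄⁻¹ = L^{1/3}·((b² + a²·v₅·v₈)/(a·b·v₅))³, v₅⁻¹ = L^{1/3}·((b² + a²·v₁·v₄)/(a·b·v₄))³, v₈ = L^{1/3}·((1 + (ab)²·v₅·v₈)/(a·b·v₅))³. Then v₄⁷·v₅⁻³ = ((1 + (ab)²·v₄⁴)/(b² + a²·v₅⁴))³ and v₅⁷·v₄⁻³ = ((1 + (ab)²·v₅⁴)/(b² + a²·v₄⁴))³. -/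
/-!
After substituting `v₁ = v₄ ^ 3` and `v₈ = v₅ ^ 3`, two of the equations have a power of `v₄` on the
left and the other two a power of `v₅`. Dividing the first equation of such a pair by the second
cancels the common factors `L ^ (1 / 3)` and `a * b`, which cannot vanish: if one did, the
right-hand side of the second equation would be `0`, while its left-hand side is `v₄⁻¹` or `v₅⁻¹`.
-/

theorem div_mul_div_eq_of_common_factors {G : Type*} [CommGroupWithZero G] {c k p q s t u w : G}
    (hs : s ≠ 0) (hw : w ≠ 0) (hu_eq : u = c * (p / (k * s))) (hw_eq : w = c * (q / (k * t))) :
    u / w * (s / t) = p / q := by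
  obtain ⟨hc, hqkt⟩ := mul_ne_zero_iff.mp (hw_eq ▸ hw)
  obtain ⟨-, hkt⟩ := div_ne_zero_iff.mp hqkt
  obtain ⟨hk, ht⟩ := mul_ne_zero_iff.mp hkt
  rw [hu_eq, hw_eq]
  field_simp

theorem pow_mul_inv_pow_eq_div_pow {G : Type*} [CommGroupWithZero G] {c k p q x y : G} {m n : ℕ}
    (hx : x ≠ 0) (hpow : x ^ m = c * (p / (k * x)) ^ n) (hinv : x⁻¹ = c * (q / (k * y)) ^ n) :
    x ^ (m + n + 1) * (y ^ n)⁻¹ = (p / q) ^ n := by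
  simp only [div_pow, mul_pow] at hpow hinv
  calc
    x ^ (m + n + 1) * (y ^ n)⁻¹ = x ^ m / x⁻¹ * (x ^ n / y ^ n) := by
      rw [div_inv_eq_mul, ← mul_div_assoc, div_eq_mul_inv, mul_assoc (x ^ m), ← pow_succ',
        ← pow_add, add_assoc]
    _ = p ^ n / q ^ n :=
      div_mul_div_eq_of_common_factors (pow_ne_zero n hx) (inv_ne_zero hx) hpow hinv
    _ = (p / q) ^ n := (div_pow p q n).symm

/-- The scalar `c` plays the role of `L ^ (1 / 3)`, and `n` that of the exponent `3`. -/
theorem reduced_equations_general {K : Type*} [Field K] (n : ℕ) (a b c v₁ v₄ v₅ v₈ : K)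
    (hv4 : v₄ ≠ 0) (hv5 : v₅ ≠ 0) (h14 : v₁ = v₄ ^ n) (h85 : v₈ = v₅ ^ n)
    (e1 : v₁ = c * ((1 + (a * b) ^ 2 * v₁ * v₄) / (a * b * v₄)) ^ n)
    (e4 : v₄⁻¹ = c * ((b ^ 2 + a ^ 2 * v₅ * v₈) / (a * b * v₅)) ^ n)
    (e5 : v₅⁻¹ = c * ((b ^ 2 + a ^ 2 * v₁ * v₄) / (a * b * v₄)) ^ n)
    (e8 : v₈ = c * ((1 + (a * b) ^ 2 * v₅ * v₈) / (a * b * v₅)) ^ n) :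
    v₄ ^ (2 * n + 1) * (v₅ ^ n)⁻¹ =
        ((1 + (a * b) ^ 2 * v₄ ^ (n + 1)) / (b ^ 2 + a ^ 2 * v₅ ^ (n + 1))) ^ n ∧
      v₅ ^ (2 * n + 1) * (v₄ ^ n)⁻¹ =
        ((1 + (a * b) ^ 2 * v₅ ^ (n + 1)) / (b ^ 2 + a ^ 2 * v₄ ^ (n + 1))) ^ n := by
  subst h14 h85
  simp only [mul_assoc ((a * b) ^ 2), mul_assoc (a ^ 2), ← pow_succ, ← pow_succ'] at e1 e4 e5 e8
  rw [two_mul]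
  exact ⟨pow_mul_inv_pow_eq_div_pow hv4 e1 e4, pow_mul_inv_pow_eq_div_pow hv5 e8 e5⟩

/-- For positive `a, b, L` and positive `v₁, v₄, v₅, v₈` with `v₁ = v₄³`, `v₈ = v₅³`
satisfying the translation-invariant fixed-point system, one obtains the reduced
equations `v₄⁷·v₅⁻³ = ((1 + (ab)²·v₄⁴)/(b² + a²·v₅⁴))³` and
`v₅⁷·v₄⁻³ = ((1 + (ab)²·v₅⁴)/(b² + a²·v₄⁴))³`. -/
theorem reduced_equations (a b L v₁ v₄ v₅ v₈ : ℝ)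
    (ha : 0 < a) (hb : 0 < b) (hL : 0 < L)
    (hv1 : 0 < v₁) (hv4 : 0 < v₄) (hv5 : 0 < v₅) (hv8 : 0 < v₈)
    (h14 : v₁ = v₄ ^ 3) (h85 : v₈ = v₅ ^ 3)
    (e1 : v₁ = L ^ ((1 : ℝ) / 3) * ((1 + (a * b) ^ 2 * v₁ * v₄) / (a * b * v₄)) ^ 3)
    (e4 : v₄⁻¹ = L ^ ((1 : ℝ) / 3) * ((b ^ 2 + a ^ 2 * v₅ * v₈) / (a * b * v₅)) ^ 3)
    (e5 : v₅⁻¹ = L ^ ((1 : ℝ) / 3) * ((b ^ 2 + a ^ 2 * v₁ * v₄) / (a * b * v₄)) ^ 3)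
    (e8 : v₈ = L ^ ((1 : ℝ) / 3) * ((1 + (a * b) ^ 2 * v₅ * v₈) / (a * b * v₅)) ^ 3) :
    v₄ ^ 7 * (v₅ ^ 3)⁻¹ = ((1 + (a * b) ^ 2 * v₄ ^ 4) / (b ^ 2 + a ^ 2 * v₅ ^ 4)) ^ 3 ∧
    v₅ ^ 7 * (v₄ ^ 3)⁻¹ = ((1 + (a * b) ^ 2 * v₅ ^ 4) / (b ^ 2 + a ^ 2 * v₄ ^ 4)) ^ 3 :=
  reduced_equations_general 3 a b (L ^ ((1 : ℝ) / 3)) v₁ v₄ v₅ v₈ hv4.ne' hv5.ne'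
    h14 h85 e1 e4 e5 e8
end

section
/- Let c = e^{2·(−1.7)/13} and d = e^{2·(6.5)/13} = e (i.e., the parameters corresponding to coupling constants J = −1.7, J_p = 6.5 and temperature T = 13). Then the equation x = ((1 + c·d·x)/(d + c·x))³ has at least three distinct solutions with x > 0. -/
/-!
On `[0, ∞)` the map `g x = ((1 + c * d * x) / (d + c * x)) ^ k` takes values in `(0, d ^ k]` when
`1 ≤ d`, so its graph starts above the diagonal and ends on or below it. If it dips below the
diagonal at `a` and rises above it again at some `b > a`, the intermediate value theorem yields
three fixed points. At a perfect power `s ^ k`, whether `g` lies above or below the diagonal is the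
sign of the polynomial `1 + c * d * s ^ k - s * (d + c * s ^ k)`; for the parameters at hand it is
negative at `s = 1`, where it equals `-(1 - c) * (d - 1)`, and positive at `s = 17 / 10`.
-/

open Function Set

section FixedPoints

variable {α : Type*} [ConditionallyCompleteLinearOrder α] [TopologicalSpace α] [OrderTopology α]
  [DenselyOrdered α] {f : α → α} {l a b u : α}

theorem exists_three_isFixedPt (hf : ContinuousOn f (Icc l u)) (hla : l ≤ a) (hab : a ≤ b)
    (hbu : b ≤ u) (hl : l ≤ f l) (ha : f a < a) (hb : b < f b) (hu : f u ≤ u) :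
    ∃ x ∈ Ico l a, ∃ y ∈ Ioo a b, ∃ z ∈ Ioc b u,
      IsFixedPt f x ∧ IsFixedPt f y ∧ IsFixedPt f z := by
  have ne_a {t : α} (ht : IsFixedPt f t) : t ≠ a := fun h => ha.ne (h ▸ ht)
  have ne_b {t : α} (ht : IsFixedPt f t) : t ≠ b := fun h => hb.ne' (h ▸ ht)
  obtain ⟨x, hx, hfx⟩ := exists_mem_Icc_isFixedPt
    (hf.mono (Icc_subset_Icc_right (hab.trans hbu))) hla hl ha.le
  obtain ⟨y, hy, hfy⟩ := isPreconnected_Icc.intermediate_value₂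
    (left_mem_Icc.2 hab) (right_mem_Icc.2 hab) (hf.mono (Icc_subset_Icc hla hbu)) continuousOn_id
    ha.le hb.le
  obtain ⟨z, hz, hfz⟩ := exists_mem_Icc_isFixedPt
    (hf.mono (Icc_subset_Icc_left (hla.trans hab))) hbu hb.le hu
  exact ⟨x, ⟨hx.1, hx.2.lt_of_ne (ne_a hfx)⟩,
    y, ⟨hy.1.lt_of_ne' (ne_a hfy), hy.2.lt_of_ne (ne_b hfy)⟩,
    z, ⟨hz.1.lt_of_ne' (ne_b hfz), hz.2⟩, hfx, hfy, hfz⟩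

end FixedPoints

/-- The recursion map of the Ising–Vannimenus model for the exponent `k`; the paper's `g`, for the
Cayley tree of order three, is the case `k = 3`. Its positive fixed points correspond to
translation-invariant Gibbs measures, with `c = exp (2 * J / T)` and `d = exp (2 * J_p / T)`. -/
noncomputable def isingVannimenusMap (k : ℕ) (c d x : ℝ) : ℝ :=
  ((1 + c * d * x) / (d + c * x)) ^ k

namespace isingVannimenusMap

variable {k : ℕ} {c d a b s x : ℝ}

theorem pos (hc : 0 ≤ c) (hd : 0 < d) (hx : 0 ≤ x) : 0 < isingVannimenusMap k c d x := by
  unfold isingVannimenusMap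
  positivity

theorem continuousOn (hc : 0 ≤ c) (hd : 0 < d) :
    ContinuousOn (isingVannimenusMap k c d) (Ici 0) := by
  refine (ContinuousOn.div (by fun_prop) (by fun_prop) fun x (hx : 0 ≤ x) => ?_).pow k
  positivity

theorem le_pow (hc : 0 ≤ c) (hd : 1 ≤ d) (hx : 0 ≤ x) : isingVannimenusMap k c d x ≤ d ^ k := by
  have hden : 0 < d + c * x := by positivity
  have hquot : (1 + c * d * x) / (d + c * x) ≤ d := by
    rw [div_le_iff₀ hden]
    nlinarith
  exact pow_le_pow_left₀ (by positivity) hquot k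

theorem apply_pow_lt_pow_iff (hk : k ≠ 0) (hc : 0 ≤ c) (hd : 0 < d) (hs : 0 ≤ s) :
    isingVannimenusMap k c d (s ^ k) < s ^ k ↔ 1 + c * d * s ^ k < s * (d + c * s ^ k) := by
  rw [isingVannimenusMap, pow_lt_pow_iff_left₀ (by positivity) hs hk, div_lt_iff₀ (by positivity)]

theorem pow_lt_apply_pow_iff (hk : k ≠ 0) (hc : 0 ≤ c) (hd : 0 < d) (hs : 0 ≤ s) :
    s ^ k < isingVannimenusMap k c d (s ^ k) ↔ s * (d + c * s ^ k) < 1 + c * d * s ^ k := by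
  rw [isingVannimenusMap, pow_lt_pow_iff_left₀ hs (by positivity) hk, lt_div_iff₀ (by positivity)]

theorem apply_one_lt_one (hk : k ≠ 0) (hc : 0 ≤ c) (hc1 : c < 1) (hd : 1 < d) :
    isingVannimenusMap k c d 1 < 1 := by
  have h := apply_pow_lt_pow_iff (s := 1) hk hc (zero_lt_one.trans hd) zero_le_one
  rw [one_pow] at h
  exact h.2 (by nlinarith [mul_pos (sub_pos.2 hc1) (sub_pos.2 hd)])

theorem exists_three_pos_isFixedPt (hc : 0 ≤ c) (hd : 1 ≤ d) (ha : 0 ≤ a) (hab : a ≤ b)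
    (hga : isingVannimenusMap k c d a < a) (hgb : b < isingVannimenusMap k c d b) :
    ∃ x ∈ Ioo 0 a, ∃ y ∈ Ioo a b, ∃ z ∈ Ioc b (d ^ k),
      IsFixedPt (isingVannimenusMap k c d) x ∧ IsFixedPt (isingVannimenusMap k c d) y ∧
        IsFixedPt (isingVannimenusMap k c d) z := by
  have hd0 : 0 < d := zero_lt_one.trans_le hd
  have hbu : b ≤ d ^ k := hgb.le.trans (le_pow hc hd (ha.trans hab))
  obtain ⟨x, hx, y, hy, z, hz, hgx, hgy, hgz⟩ := exists_three_isFixedPt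
    ((continuousOn hc hd0).mono Icc_subset_Ici_self) ha hab hbu (pos hc hd0 le_rfl).le hga hgb
    (le_pow hc hd (by positivity))
  have hx0 : 0 < x := hgx ▸ pos hc hd0 hx.1
  exact ⟨x, ⟨hx0, hx.2⟩, y, hy, z, hz, hgx, hgy, hgz⟩

theorem cube_lt_apply_cube (hc : 48 / 65 ≤ c) (hd : 27 / 10 ≤ d) :
    (17 / 10) ^ 3 < isingVannimenusMap 3 c d ((17 / 10) ^ 3) := by
  rw [pow_lt_apply_pow_iff three_ne_zero (by linarith) (by linarith) (by norm_num)]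
  nlinarith [mul_nonneg (sub_nonneg.2 hc) (sub_nonneg.2 hd)]

end isingVannimenusMap

/-- For the parameters `c = e^(2·(−1.7)/13)` and `d = e^(2·6.5/13)` (corresponding to
coupling constants `J = −1.7`, `J_p = 6.5` and temperature `T = 13`), the equation
`x = ((1 + c·d·x)/(d + c·x))³` has at least three distinct positive solutions;
hence a phase transition occurs. -/
theorem phase_transition_example :
    ∃ x y z : ℝ, 0 < x ∧ 0 < y ∧ 0 < z ∧ x ≠ y ∧ x ≠ z ∧ y ≠ z ∧
      (x = ((1 + Real.exp (2 * (-1.7) / 13) * Real.exp (2 * 6.5 / 13) * x)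
            / (Real.exp (2 * 6.5 / 13) + Real.exp (2 * (-1.7) / 13) * x)) ^ 3) ∧
      (y = ((1 + Real.exp (2 * (-1.7) / 13) * Real.exp (2 * 6.5 / 13) * y)
            / (Real.exp (2 * 6.5 / 13) + Real.exp (2 * (-1.7) / 13) * y)) ^ 3) ∧
      (z = ((1 + Real.exp (2 * (-1.7) / 13) * Real.exp (2 * 6.5 / 13) * z)
            / (Real.exp (2 * 6.5 / 13) + Real.exp (2 * (-1.7) / 13) * z)) ^ 3) := by
  set c := Real.exp (2 * (-1.7) / 13)
  set d := Real.exp (2 * 6.5 / 13) with hd_def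
  have hc_lower : 48 / 65 ≤ c := le_trans (by norm_num) (Real.add_one_le_exp (2 * (-1.7) / 13))
  have hc_lt_one : c < 1 := Real.exp_lt_one_iff.2 (by norm_num)
  have hd_lower : 27 / 10 ≤ d := by
    rw [hd_def, show (2 * 6.5 / 13 : ℝ) = 1 by norm_num]
    linarith [Real.exp_one_gt_d9]
  have hc_nonneg : 0 ≤ c := Real.exp_nonneg _
  have hd_gt_one : 1 < d := by linarith
  obtain ⟨x, hx, y, hy, z, hz, hgx, hgy, hgz⟩ :=
    isingVannimenusMap.exists_three_pos_isFixedPt hc_nonneg hd_gt_one.le zero_le_one (by norm_num)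
      (isingVannimenusMap.apply_one_lt_one three_ne_zero hc_nonneg hc_lt_one hd_gt_one)
      (isingVannimenusMap.cube_lt_apply_cube hc_lower hd_lower)
  have hxy : x < y := hx.2.trans hy.1
  have hyz : y < z := hy.2.trans hz.1
  exact ⟨x, y, z, hx.1, hx.1.trans hxy, (hx.1.trans hxy).trans hyz, hxy.ne, (hxy.trans hyz).ne,
    hyz.ne, hgx.symm, hgy.symm, hgz.symm⟩
end
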